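/- arXiv:2202.02551 — 2 statements merged into one kernel-verified Lean document; each statement's English description precedes it below -/
import Mathlib

section
/- Let (A,B,C) be the equilateral triangle with A = 1, B = (−1 + √3·I)/2, C = (−1 − √3·I)/2, let M = x + y·I be a point such that three successive applications of the circumcenter map with respect to M are defined, let (A''',B''',C''') be the third iterate, and suppose σ ∈ ℂ satisfies A''' − M = σ*(A − M), B''' − M = σ*(B − M), C''' − M = σ*(C − M). Then the rotation induced by the similarity is trivial or by π (i.e., Im σ = 0) if and only if y·(y² − 3x²) = 0, i.e., if and only if M lies on one of the three lines through the centroid along directions 0, π/3, 2π/3. -/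
open scoped Classical

/-- Circumcenter of three points of `ℂ` (junk value `0` if the points are collinear).
When the points are affinely independent this is the unique point equidistant from all three. -/
noncomputable def ccenter (A B C : ℂ) : ℂ :=
  if h : AffineIndependent ℝ ![A, B, C] then
    (⟨![A, B, C], h⟩ : Affine.Simplex ℝ ℂ 2).circumcenter
  else 0

/-- The circumcenter map on triangles: `(A,B,C)` is sent to
`(circumcenter(M,B,C), circumcenter(M,C,A), circumcenter(M,A,B))`. -/
noncomputable def tmap (M : ℂ) (T : ℂ × ℂ × ℂ) : ℂ × ℂ × ℂ :=
  (ccenter M T.2.1 T.2.2, ccenter M T.2.2 T.1, ccenter M T.1 T.2.1)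

/-- The circumcenter map is defined at `(M, T)`: each of the triples
`(M,B,C)`, `(M,C,A)`, `(M,A,B)` is non-collinear. -/
def TDef (M : ℂ) (T : ℂ × ℂ × ℂ) : Prop :=
  AffineIndependent ℝ ![M, T.2.1, T.2.2] ∧ AffineIndependent ℝ ![M, T.2.2, T.1] ∧
    AffineIndependent ℝ ![M, T.1, T.2.1]

/-!
Record the direction of `z ≠ 0` modulo sign by `sqPhase z = z / conj z`, which is multiplicative.
A chord `p - q` of a circle centred at `0` with radius `R` has `sqPhase (p - q) = -p q / R ^ 2`, so
one step of the map sends the directions `a, b, c` of `A - M, B - M, C - M` to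
`-b c / sqPhase (B - C)` and its cyclic images. The line of centres `B' C'` is perpendicular to the
common chord `M A`, so the second step has direction `b' c' / a`. Hence the third step has direction
`b'' c'' / a' = a' b' c' / (b c)`, and dividing by `a` gives `sqPhase σ = -sqPhase Z` with
`Z = (A - M) (B - M) (C - M) / ((B - C) (C - A) (A - B))`; thus `σ` is real iff `Z` is purely
imaginary. For the equilateral triangle `Z` is a real multiple of `(1 - M ^ 3) I`.
-/

open scoped ComplexConjugate

section SqPhase

/-- The square of the phase of a complex number, `exp (2 i arg z)`. It determines the real line
spanned by `z ≠ 0`. Bundled as a homomorphism so that it is multiplicative by construction; its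
value at `0` is `0`. -/
noncomputable def sqPhase : ℂ →*₀ ℂ where
  toFun z := z / conj z
  map_zero' := by simp
  map_one' := by simp
  map_mul' z w := by rw [map_mul, mul_div_mul_comm]

variable {z w p q : ℂ}

lemma sqPhase_apply (z : ℂ) : sqPhase z = z / conj z := rfl

lemma sqPhase_neg (z : ℂ) : sqPhase (-z) = sqPhase z := by
  rw [sqPhase_apply, map_neg, neg_div_neg_eq, sqPhase_apply]

lemma sqPhase_sub_comm (z w : ℂ) : sqPhase (z - w) = sqPhase (w - z) := by
  rw [← neg_sub, sqPhase_neg]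

lemma sqPhase_conj (z : ℂ) : sqPhase (conj z) = (sqPhase z)⁻¹ := by
  rw [sqPhase_apply, sqPhase_apply, Complex.conj_conj, inv_div]

lemma sqPhase_eq_one_iff (hz : z ≠ 0) : sqPhase z = 1 ↔ z.im = 0 := by
  rw [sqPhase_apply, div_eq_one_iff_eq ((map_ne_zero _).2 hz), eq_comm, Complex.conj_eq_iff_im]

lemma sqPhase_eq_neg_one_iff (hz : z ≠ 0) : sqPhase z = -1 ↔ z.re = 0 := by
  rw [sqPhase_apply, div_eq_iff ((map_ne_zero _).2 hz), neg_one_mul, eq_neg_iff_add_eq_zero,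
    Complex.add_conj, Complex.ofReal_eq_zero, mul_eq_zero, or_iff_right two_ne_zero]

lemma im_eq_zero_iff_re_eq_zero_of_sqPhase_eq_neg (h : sqPhase z = -sqPhase w) :
    z.im = 0 ↔ w.re = 0 := by
  by_cases hw : w = 0
  · have hz : z = 0 := by simpa [hw] using h
    simp [hz, hw]
  · have hz : z ≠ 0 := by
      rw [← map_ne_zero sqPhase, h, neg_ne_zero, map_ne_zero]
      exact hw
    rw [← sqPhase_eq_one_iff hz, ← sqPhase_eq_neg_one_iff hw, h, neg_eq_iff_eq_neg]

lemma sqPhase_eq_neg_of_inner_eq_zero (hz : z ≠ 0) (hw : w ≠ 0) (h : inner ℝ z w = 0) :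
    sqPhase z = -sqPhase w := by
  have hre : (w * conj z).re = 0 := by rwa [Complex.inner] at h
  have hphase : sqPhase w * (sqPhase z)⁻¹ = -1 := by
    rw [← sqPhase_conj, ← map_mul]
    exact (sqPhase_eq_neg_one_iff (mul_ne_zero hw ((map_ne_zero _).2 hz))).2 hre
  rw [mul_inv_eq_iff_eq_mul₀ ((map_ne_zero _).2 hz)] at hphase
  rw [hphase, neg_one_mul, neg_neg]

lemma sqPhase_eq_sq_div_norm_sq (z : ℂ) : sqPhase z = z ^ 2 / (‖z‖ : ℂ) ^ 2 := by
  rw [← Complex.mul_conj', sqPhase_apply]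
  rcases eq_or_ne z 0 with rfl | hz
  · simp
  · rw [sq, mul_div_mul_left _ _ hz]

lemma sqPhase_sub_of_norm_eq (h : ‖p‖ = ‖q‖) (hpq : p ≠ q) :
    sqPhase (p - q) = -(p * q) / (‖p‖ : ℂ) ^ 2 := by
  have hp : (‖p‖ : ℂ) ^ 2 ≠ 0 := by
    have : p ≠ 0 := by
      rintro rfl
      exact hpq (norm_eq_zero.1 (h.symm.trans norm_zero)).symm
    simpa using this
  have hpp : p * conj p = (‖p‖ : ℂ) ^ 2 := Complex.mul_conj' p
  have hqq : q * conj q = (‖p‖ : ℂ) ^ 2 := by rw [h, Complex.mul_conj']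
  rw [sqPhase_apply, div_eq_div_iff ((map_ne_zero _).2 (sub_ne_zero.2 hpq)) hp, map_sub]
  linear_combination q * hpp - p * hqq

/-- Modulo `π`, the angle `OMB` is complementary to the inscribed angle `MCB`. -/
lemma sqPhase_center_sub {O M B C : ℂ} (hB : dist M O = dist B O) (hC : dist M O = dist C O)
    (hBM : B ≠ M) (hCM : C ≠ M) (hBC : B ≠ C) :
    sqPhase (O - M) = -(sqPhase (B - M) * sqPhase (C - M) / sqPhase (B - C)) := by
  rw [Complex.dist_eq, Complex.dist_eq] at hB hC
  have chord {P Q : ℂ} (hP : ‖M - O‖ = ‖P - O‖) (hQ : ‖M - O‖ = ‖Q - O‖) (hPQ : P ≠ Q) :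
      sqPhase (P - Q) = -((P - O) * (Q - O)) / (‖M - O‖ : ℂ) ^ 2 := by
    rw [hP, ← sqPhase_sub_of_norm_eq (hP.symm.trans hQ) (sub_left_injective.ne hPQ),
      sub_sub_sub_cancel_right]
  have hR : ‖M - O‖ ≠ 0 := by
    intro h
    have hMO : M = O := sub_eq_zero.1 (norm_eq_zero.1 h)
    have hBO : B = O := sub_eq_zero.1 (norm_eq_zero.1 (hB.symm.trans h))
    exact hBM (hBO.trans hMO.symm)
  have hBO : B - O ≠ 0 := norm_ne_zero_iff.1 (hB ▸ hR)
  have hCO : C - O ≠ 0 := norm_ne_zero_iff.1 (hC ▸ hR)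
  have hR_coe : (‖M - O‖ : ℂ) ≠ 0 := Complex.ofReal_ne_zero.2 hR
  rw [sqPhase_sub_comm O, sqPhase_eq_sq_div_norm_sq, chord hB rfl hBM, chord hC rfl hCM,
    chord hB hC hBC]
  field_simp

lemma sqPhase_sub_of_dist_eq {M A P Q : ℂ} (hP : dist M P = dist A P) (hQ : dist M Q = dist A Q)
    (hAM : A ≠ M) (hPQ : P ≠ Q) : sqPhase (P - Q) = -sqPhase (A - M) :=
  sqPhase_eq_neg_of_inner_eq_zero (sub_ne_zero.2 hPQ) (sub_ne_zero.2 hAM)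
    (EuclideanGeometry.inner_vsub_vsub_of_dist_eq_of_dist_eq hQ hP)

end SqPhase

section CircumcenterMap

lemma dist_ccenter_eq {A B C : ℂ} (h : AffineIndependent ℝ ![A, B, C]) (i j : Fin 3) :
    dist (![A, B, C] i) (ccenter A B C) = dist (![A, B, C] j) (ccenter A B C) := by
  rw [ccenter, dif_pos h]
  exact Affine.Simplex.dist_circumcenter_eq_circumradius ⟨![A, B, C], h⟩ i |>.trans
    (Affine.Simplex.dist_circumcenter_eq_circumradius ⟨![A, B, C], h⟩ j).symm

lemma sqPhase_ccenter_sub {M B C : ℂ} (h : AffineIndependent ℝ ![M, B, C]) :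
    sqPhase (ccenter M B C - M) = -(sqPhase (B - M) * sqPhase (C - M) / sqPhase (B - C)) :=
  sqPhase_center_sub (dist_ccenter_eq h 0 1) (dist_ccenter_eq h 0 2)
    (h.injective.ne (by decide : (1 : Fin 3) ≠ 0)) (h.injective.ne (by decide : (2 : Fin 3) ≠ 0))
    (h.injective.ne (by decide : (1 : Fin 3) ≠ 2))

/-- Cyclic relabelling of the vertices of a triangle; the circumcenter map commutes with it, so
statements about the first vertex transfer to the other two. -/
@[simps]
def cycleVertices (T : ℂ × ℂ × ℂ) : ℂ × ℂ × ℂ := (T.2.1, T.2.2, T.1)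

lemma tmap_cycleVertices (M : ℂ) (T : ℂ × ℂ × ℂ) :
    tmap M (cycleVertices T) = cycleVertices (tmap M T) := rfl

variable {M : ℂ} {T : ℂ × ℂ × ℂ}

lemma TDef.cycleVertices (h : TDef M T) : TDef M (cycleVertices T) :=
  ⟨h.2.1, h.2.2, h.1⟩

lemma TDef.fst_ne (h : TDef M T) : T.1 ≠ M :=
  h.2.2.injective.ne (by decide : (1 : Fin 3) ≠ 0)

lemma TDef.snd_ne_thd (h : TDef M T) : T.2.1 ≠ T.2.2 :=
  h.1.injective.ne (by decide : (1 : Fin 3) ≠ 2)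

lemma sqPhase_tmap_fst_sub (h : TDef M T) :
    sqPhase ((tmap M T).1 - M) =
      -(sqPhase (T.2.1 - M) * sqPhase (T.2.2 - M) / sqPhase (T.2.1 - T.2.2)) :=
  sqPhase_ccenter_sub h.1

lemma sqPhase_tmap_snd_sub_thd (h : TDef M T) (h' : TDef M (tmap M T)) :
    sqPhase ((tmap M T).2.1 - (tmap M T).2.2) = -sqPhase (T.1 - M) :=
  sqPhase_sub_of_dist_eq (dist_ccenter_eq h.2.1 0 2) (dist_ccenter_eq h.2.2 0 1) h.fst_ne
    h'.snd_ne_thd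

lemma sqPhase_tmap_tmap_fst_sub (h : TDef M T) (h' : TDef M (tmap M T)) :
    sqPhase ((tmap M (tmap M T)).1 - M) =
      sqPhase ((tmap M T).2.1 - M) * sqPhase ((tmap M T).2.2 - M) / sqPhase (T.1 - M) := by
  rw [sqPhase_tmap_fst_sub h', sqPhase_tmap_snd_sub_thd h h', div_neg, neg_neg]

lemma sqPhase_tmap_tmap_tmap_fst_sub (h : TDef M T) (h' : TDef M (tmap M T))
    (h'' : TDef M (tmap M (tmap M T))) :
    sqPhase ((tmap M (tmap M (tmap M T))).1 - M) =
      sqPhase ((tmap M T).1 - M) * sqPhase ((tmap M T).2.1 - M) * sqPhase ((tmap M T).2.2 - M) /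
        (sqPhase (T.2.1 - M) * sqPhase (T.2.2 - M)) := by
  have hsnd : sqPhase ((tmap M (tmap M T)).2.1 - M) =
      sqPhase ((tmap M T).2.2 - M) * sqPhase ((tmap M T).1 - M) / sqPhase (T.2.1 - M) := by
    simpa only [tmap_cycleVertices, cycleVertices_fst, cycleVertices_snd] using
      sqPhase_tmap_tmap_fst_sub h.cycleVertices h'.cycleVertices
  have hthd : sqPhase ((tmap M (tmap M T)).2.2 - M) =
      sqPhase ((tmap M T).1 - M) * sqPhase ((tmap M T).2.1 - M) / sqPhase (T.2.2 - M) := by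
    simpa only [tmap_cycleVertices, cycleVertices_fst, cycleVertices_snd] using
      sqPhase_tmap_tmap_fst_sub h.cycleVertices.cycleVertices h'.cycleVertices.cycleVertices
  have hne : sqPhase ((tmap M T).1 - M) ≠ 0 := (map_ne_zero _).2 (sub_ne_zero.2 h'.fst_ne)
  rw [sqPhase_tmap_tmap_fst_sub h' h'', hsnd, hthd]
  field_simp

lemma sqPhase_tmap_fst_mul_snd_mul_thd (h : TDef M T) :
    sqPhase ((tmap M T).1 - M) * sqPhase ((tmap M T).2.1 - M) * sqPhase ((tmap M T).2.2 - M) =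
      -(sqPhase ((T.1 - M) * (T.2.1 - M) * (T.2.2 - M)) ^ 2 /
        sqPhase ((T.2.1 - T.2.2) * (T.2.2 - T.1) * (T.1 - T.2.1))) := by
  have hsnd : sqPhase ((tmap M T).2.1 - M) =
      -(sqPhase (T.2.2 - M) * sqPhase (T.1 - M) / sqPhase (T.2.2 - T.1)) := by
    simpa only [tmap_cycleVertices, cycleVertices_fst, cycleVertices_snd] using
      sqPhase_tmap_fst_sub h.cycleVertices
  have hthd : sqPhase ((tmap M T).2.2 - M) =
      -(sqPhase (T.1 - M) * sqPhase (T.2.1 - M) / sqPhase (T.1 - T.2.1)) := by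
    simpa only [tmap_cycleVertices, cycleVertices_fst, cycleVertices_snd] using
      sqPhase_tmap_fst_sub h.cycleVertices.cycleVertices
  simp only [sqPhase_tmap_fst_sub h, hsnd, hthd, map_mul]
  ring

lemma sqPhase_of_tmap_tmap_tmap_fst_sub_eq_mul {σ : ℂ} (h : TDef M T) (h' : TDef M (tmap M T))
    (h'' : TDef M (tmap M (tmap M T)))
    (hσ : (tmap M (tmap M (tmap M T))).1 - M = σ * (T.1 - M)) :
    sqPhase σ = -sqPhase ((T.1 - M) * (T.2.1 - M) * (T.2.2 - M) /
      ((T.2.1 - T.2.2) * (T.2.2 - T.1) * (T.1 - T.2.1))) := by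
  have hfst : sqPhase (T.1 - M) ≠ 0 := (map_ne_zero _).2 (sub_ne_zero.2 h.fst_ne)
  have hsnd : sqPhase (T.2.1 - M) ≠ 0 :=
    (map_ne_zero _).2 (sub_ne_zero.2 h.cycleVertices.fst_ne)
  have hthd : sqPhase (T.2.2 - M) ≠ 0 :=
    (map_ne_zero _).2 (sub_ne_zero.2 h.cycleVertices.cycleVertices.fst_ne)
  apply mul_right_cancel₀ hfst
  rw [← map_mul, ← hσ, sqPhase_tmap_tmap_tmap_fst_sub h h' h'', sqPhase_tmap_fst_mul_snd_mul_thd h]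
  simp only [map_mul, map_div₀]
  field_simp

theorem equilateral_zero_rotation_locus_general {M A B C σ : ℂ}
    (hdef : ∀ k < 3, TDef M ((tmap M)^[k] (A, B, C)))
    (hσ : ((tmap M)^[3] (A, B, C)).1 - M = σ * (A - M)) :
    σ.im = 0 ↔ ((A - M) * (B - M) * (C - M) / ((B - C) * (C - A) * (A - B))).re = 0 := by
  have h : TDef M (A, B, C) := hdef 0 (by norm_num)
  have h' : TDef M (tmap M (A, B, C)) := hdef 1 (by norm_num)
  have h'' : TDef M (tmap M (tmap M (A, B, C))) := hdef 2 (by norm_num)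
  have hσ' : (tmap M (tmap M (tmap M (A, B, C)))).1 - M = σ * (A - M) := hσ
  have hphase := sqPhase_of_tmap_tmap_tmap_fst_sub_eq_mul h h' h'' hσ'
  exact im_eq_zero_iff_re_eq_zero_of_sqPhase_eq_neg hphase

end CircumcenterMap

section CubeRoots

variable {R : Type*} [CommRing R] {B C : R}

lemma sub_mul_sub_mul_sub_eq_one_sub_cube (hadd : B + C = -1) (hmul : B * C = 1) (M : R) :
    (1 - M) * (B - M) * (C - M) = 1 - M ^ 3 := by
  linear_combination (1 - M) * hmul - (1 - M) * M * hadd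

lemma sub_mul_sub_one_mul_one_sub (hadd : B + C = -1) (hmul : B * C = 1) :
    (B - C) * (C - 1) * (1 - B) = -3 * (B - C) := by
  linear_combination (B - C) * hadd - (B - C) * hmul

end CubeRoots

lemma equilateral_vertex_side_ratio_eq {B C : ℂ} (hB : B = (-1 + Real.sqrt 3 * Complex.I) / 2)
    (hC : C = (-1 - Real.sqrt 3 * Complex.I) / 2) (M : ℂ) :
    (1 - M) * (B - M) * (C - M) / ((B - C) * (C - 1) * (1 - B)) =
      ((3 * Real.sqrt 3)⁻¹ : ℝ) * ((1 - M ^ 3) * Complex.I) := by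
  have hsqrt : (Real.sqrt 3 : ℂ) ^ 2 = 3 := by
    rw [← Complex.ofReal_pow, Real.sq_sqrt (by norm_num), Complex.ofReal_ofNat]
  have hadd : B + C = -1 := by rw [hB, hC]; ring
  have hmul : B * C = 1 := by
    rw [hB, hC]
    linear_combination hsqrt / 4 - (Real.sqrt 3 : ℂ) ^ 2 / 4 * Complex.I_sq
  have hsub : B - C = Real.sqrt 3 * Complex.I := by rw [hB, hC]; ring
  rw [sub_mul_sub_mul_sub_eq_one_sub_cube hadd hmul, sub_mul_sub_one_mul_one_sub hadd hmul, hsub]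
  have hsqrt_ne : (Real.sqrt 3 : ℂ) ≠ 0 := by simp
  push_cast
  field_simp
  linear_combination (M ^ 3 - 1) * Complex.I_sq

lemma one_sub_cube_mul_I_re (x y : ℝ) :
    ((1 - (x + y * Complex.I : ℂ) ^ 3) * Complex.I).re = -(y * (y ^ 2 - 3 * x ^ 2)) := by
  have hexpand : (1 - (x + y * Complex.I : ℂ) ^ 3) * Complex.I =
      (-(y * (y ^ 2 - 3 * x ^ 2)) : ℝ) + (1 - x ^ 3 + 3 * x * y ^ 2 : ℝ) * Complex.I := by
    push_cast
    linear_combination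
      (-3 * x ^ 2 * y - 3 * x * y ^ 2 * Complex.I - y ^ 3 * (Complex.I ^ 2 - 1)) * Complex.I_sq
  rw [hexpand, Complex.add_re, Complex.ofReal_re, Complex.re_ofReal_mul, Complex.I_re, mul_zero,
    add_zero]

/-- For the equilateral triangle, the rotation of the similarity realized by three
applications of the circumcenter map is trivial or by `π` (i.e. `Im σ = 0`) iff
`M = x + y·I` lies on the union of the three lines `y (y² − 3x²) = 0` through the
centroid along directions `0`, `π/3`, `2π/3`. -/
theorem equilateral_zero_rotation_locus
    (x y : ℝ) (M : ℂ) (hM : M = x + y * Complex.I)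
    (A B C : ℂ) (hA : A = 1)
    (hB : B = (-1 + Real.sqrt 3 * Complex.I) / 2)
    (hC : C = (-1 - Real.sqrt 3 * Complex.I) / 2)
    (hdef : ∀ k < 3, TDef M ((tmap M)^[k] (A, B, C)))
    (σ : ℂ)
    (hσA : ((tmap M)^[3] (A, B, C)).1 - M = σ * (A - M))
    (hσB : ((tmap M)^[3] (A, B, C)).2.1 - M = σ * (B - M))
    (hσC : ((tmap M)^[3] (A, B, C)).2.2 - M = σ * (C - M)) :
    σ.im = 0 ↔ y * (y ^ 2 - 3 * x ^ 2) = 0 := by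
  subst hM hA
  rw [equilateral_zero_rotation_locus_general hdef hσA, equilateral_vertex_side_ratio_eq hB hC,
    Complex.re_ofReal_mul, one_sub_cube_mul_I_re, mul_eq_zero, or_iff_right (by simp), neg_eq_zero]
end

section
/- Let P : ZMod 4 → ℂ be the square with vertices P 0 = 1, P 1 = I, P 2 = −1, P 3 = −I, let M = x + y·I be a point such that the iterate 𝒞_M⁴(P) is defined, and suppose σ ∈ ℂ satisfies (𝒞_M⁴(P)) i − M = σ*(P i − M) for all i. Then the rotation induced by the similarity is trivial or by π (i.e., Im σ = 0) if and only if x·y·(x² − y²) = 0, i.e., if and only if M lies on one of the four lines through the center of the square along directions 0, π/4, π/2, 3π/4. -/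
open scoped Classical

/-- The circumcenter map `𝒞_M`: the `i`-th vertex of the image polygon is the
circumcenter of `M`, `P i`, `P (i+1)`. -/
noncomputable def cmap {n : ℕ} (M : ℂ) (P : ZMod n → ℂ) : ZMod n → ℂ :=
  fun i => ccenter M (P i) (P (i + 1))

/-!
Write `rᵢ = (𝒞_M(P)ᵢ - M) / (Pᵢ - M)`. If `a` and `b` are equidistant from `M` and `p`, then
`M + (a - M)(b - M)/(p - M)` is equidistant from `M`, `a` and `b`. Hence applying `𝒞_M` shifts the
sequence `r` by one index, and `n` applications to an `n`-gon multiply every `Pᵢ - M` by `∏ rᵢ`.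

The explicit formula for the circumcenter gives
`rᵢ = (Pᵢ₊₁ - M) · conj (Pᵢ - Pᵢ₊₁) / (real · I)`. For `P` on a circle with center `c`, conjugation
turns `(Pᵢ - c) · conj (Pᵢ - Pᵢ₊₁) / I` into `(Pᵢ₊₁ - c) · conj (Pᵢ - Pᵢ₊₁) / I`, so the product of
these numbers over all edges is real. Therefore `∏ rᵢ` is a real multiple of
`∏ (Pᵢ - M) / (Pᵢ - c)`, which for the square is `1 - M ^ 4`.
-/

open ComplexConjugate

theorem prod_range_add_natCast_zmod {α : Type*} [CommMonoid α] {n : ℕ} [NeZero n]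
    (f : ZMod n → α) (i : ZMod n) :
    ∏ j ∈ Finset.range n, f (i + j) = ∏ j, f j := by
  calc
    ∏ j ∈ Finset.range n, f (i + j) = ∏ j, f (i + j) :=
      Finset.prod_nbij' (fun j => (j : ZMod n)) ZMod.val (by simp)
        (fun j _ => Finset.mem_range.2 j.val_lt)
        (fun _ hj => ZMod.val_cast_of_lt (Finset.mem_range.1 hj))
        (fun j _ => ZMod.natCast_zmod_val j) (fun _ _ => rfl)
    _ = ∏ j, f j := Equiv.prod_comp (Equiv.addLeft i) f

section Circumcenter

variable {M a b : ℂ}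

theorem ccenter_sub_eq_of_norm_eq (h : AffineIndependent ℝ ![M, a, b]) {w : ℂ}
    (ha : ‖a - M - w‖ = ‖w‖) (hb : ‖b - M - w‖ = ‖w‖) : ccenter M a b - M = w := by
  have span_eq_top : affineSpan ℝ (Set.range ![M, a, b]) = ⊤ :=
    h.affineSpan_eq_top_iff_card_eq_finrank_add_one.2 (by simp)
  rw [ccenter, dif_pos h, sub_eq_iff_eq_add']
  refine (Affine.Simplex.eq_circumcenter_of_dist_eq _ (r := ‖w‖) ?_ ?_).symm
  · simp only [span_eq_top, AffineSubspace.mem_top]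
  · intro i
    fin_cases i
    · simp
    · exact (dist_eq_norm _ _).trans ((congrArg norm (sub_sub a M w)).symm.trans ha)
    · exact (dist_eq_norm _ _).trans ((congrArg norm (sub_sub b M w)).symm.trans hb)

theorem dist_ccenter_left (h : AffineIndependent ℝ ![M, a, b]) :
    dist a (ccenter M a b) = dist M (ccenter M a b) := by
  rw [ccenter, dif_pos h]
  let s : Affine.Simplex ℝ ℂ 2 := ⟨![M, a, b], h⟩
  exact (s.dist_circumcenter_eq_circumradius 1).trans (s.dist_circumcenter_eq_circumradius 0).symm

theorem dist_ccenter_right (h : AffineIndependent ℝ ![M, a, b]) :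
    dist b (ccenter M a b) = dist M (ccenter M a b) := by
  rw [ccenter, dif_pos h]
  let s : Affine.Simplex ℝ ℂ 2 := ⟨![M, a, b], h⟩
  exact (s.dist_circumcenter_eq_circumradius 2).trans (s.dist_circumcenter_eq_circumradius 0).symm

theorem ccenter_sub_of_dist_eq (h : AffineIndependent ℝ ![M, a, b]) {p : ℂ} (hp : p ≠ M)
    (ha : dist p a = dist M a) (hb : dist p b = dist M b) :
    ccenter M a b - M = (a - M) * (b - M) / (p - M) := by
  have hpM : p - M ≠ 0 := sub_ne_zero.2 hp
  have norm_a : ‖p - a‖ = ‖a - M‖ := by rw [← dist_eq_norm, ha, dist_comm, dist_eq_norm]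
  have norm_b : ‖p - b‖ = ‖b - M‖ := by rw [← dist_eq_norm, hb, dist_comm, dist_eq_norm]
  apply ccenter_sub_eq_of_norm_eq h
  · have sub_eq : a - M - (a - M) * (b - M) / (p - M) = (a - M) * (p - b) / (p - M) := by
      field_simp
      ring
    rw [sub_eq, norm_div, norm_mul, norm_b, norm_div, norm_mul]
  · have sub_eq : b - M - (a - M) * (b - M) / (p - M) = (p - a) * (b - M) / (p - M) := by
      field_simp
      ring
    rw [sub_eq, norm_div, norm_mul, norm_a, norm_div, norm_mul]

/-- Twice the signed area of the triangle `M a b`. -/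
noncomputable def doubleArea (M a b : ℂ) : ℝ :=
  (conj (a - M) * (b - M)).im

theorem two_mul_doubleArea_mul_I (M a b : ℂ) :
    2 * (doubleArea M a b * Complex.I) = conj (a - M) * (b - M) - (a - M) * conj (b - M) := by
  have h := Complex.sub_conj (conj (a - M) * (b - M))
  rw [map_mul, Complex.conj_conj] at h
  rw [h, doubleArea]
  push_cast
  ring

theorem ne_left_of_affineIndependent (h : AffineIndependent ℝ ![M, a, b]) : a ≠ M :=
  h.injective.ne (show (1 : Fin 3) ≠ 0 by decide)

theorem doubleArea_ne_zero (h : AffineIndependent ℝ ![M, a, b]) : doubleArea M a b ≠ 0 := by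
  intro area_eq_zero
  have haM : a - M ≠ 0 := sub_ne_zero.2 (ne_left_of_affineIndependent h)
  have conj_ratio : conj ((b - M) / (a - M)) = (b - M) / (a - M) := by
    have area_eq := two_mul_doubleArea_mul_I M a b
    rw [area_eq_zero, Complex.ofReal_zero, zero_mul, mul_zero] at area_eq
    rw [map_div₀, div_eq_div_iff ((map_ne_zero _).2 haM) haM]
    linear_combination area_eq
  obtain ⟨t, ht⟩ := Complex.conj_eq_iff_real.1 conj_ratio
  have collinear : Collinear ℝ {M, a, b} := by
    refine (collinear_iff_of_mem (Set.mem_insert M _)).2 ⟨a - M, ?_⟩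
    rintro q (rfl | rfl | rfl)
    · exact ⟨0, by simp⟩
    · exact ⟨1, by simp⟩
    · refine ⟨t, ?_⟩
      rw [Complex.real_smul, ← ht, div_mul_cancel₀ _ haM, vadd_eq_add, sub_add_cancel]
  exact affineIndependent_iff_not_collinear_set.1 h collinear

theorem ccenter_sub (h : AffineIndependent ℝ ![M, a, b]) :
    ccenter M a b - M =
      (a - M) * (b - M) * conj (a - b) / (2 * (doubleArea M a b * Complex.I)) := by
  have area_ne_zero : 2 * (doubleArea M a b * Complex.I) ≠ 0 := by
    simpa using doubleArea_ne_zero h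
  have area_eq := two_mul_doubleArea_mul_I M a b
  set D := 2 * (doubleArea M a b * Complex.I)
  apply ccenter_sub_eq_of_norm_eq h
  · have sub_eq : a - M - (a - M) * (b - M) * conj (a - b) / D =
        -((a - M) * conj (b - M) * (a - b) / D) := by
      field_simp
      simp only [area_eq, map_sub]
      ring
    simp only [sub_eq, norm_neg, norm_div, norm_mul, Complex.norm_conj]
  · have sub_eq : b - M - (a - M) * (b - M) * conj (a - b) / D =
        -(conj (a - M) * (b - M) * (a - b) / D) := by
      field_simp
      simp only [area_eq, map_sub]
      ring
    simp only [sub_eq, norm_neg, norm_div, norm_mul, Complex.norm_conj]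

end Circumcenter

section CircumcenterMap

variable {n : ℕ} {M : ℂ} {P : ZMod n → ℂ}

/-- The condition under which `𝒞_M` is defined at the polygon `P`. -/
def CmapDefined (M : ℂ) (P : ZMod n → ℂ) : Prop :=
  ∀ i, AffineIndependent ℝ ![M, P i, P (i + 1)]

/-- The complex ratio by which `𝒞_M` rotates and scales the `i`-th vertex of `P` about `M`. -/
noncomputable def cmapRatio (M : ℂ) (P : ZMod n → ℂ) (i : ZMod n) : ℂ :=
  (cmap M P i - M) / (P i - M)

theorem CmapDefined.sub_ne_zero (hP : CmapDefined M P) (i : ZMod n) : P i - M ≠ 0 :=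
  _root_.sub_ne_zero.2 (ne_left_of_affineIndependent (hP i))

theorem CmapDefined.ne_succ (hP : CmapDefined M P) (i : ZMod n) : P i ≠ P (i + 1) :=
  (hP i).injective.ne (show (1 : Fin 3) ≠ 2 by decide)

theorem cmap_sub (hP : CmapDefined M P) (i : ZMod n) :
    cmap M P i - M = cmapRatio M P i * (P i - M) :=
  (div_mul_cancel₀ _ (hP.sub_ne_zero i)).symm

theorem cmapRatio_cmap (hP : CmapDefined M P) (hCP : CmapDefined M (cmap M P)) (i : ZMod n) :
    cmapRatio M (cmap M P) i = cmapRatio M P (i + 1) := by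
  have ccenter_sub_eq : cmap M (cmap M P) i - M =
      (cmap M P i - M) * (cmap M P (i + 1) - M) / (P (i + 1) - M) :=
    ccenter_sub_of_dist_eq (hCP i) (ne_left_of_affineIndependent (hP (i + 1)))
      (dist_ccenter_right (hP i)) (dist_ccenter_left (hP (i + 1)))
  rw [cmapRatio, ccenter_sub_eq, mul_div_assoc, mul_div_cancel_left₀ _ (hCP.sub_ne_zero i),
    cmapRatio]

theorem cmapRatio_iterate {k : ℕ} (hP : ∀ j ≤ k, CmapDefined M ((cmap M)^[j] P)) (i : ZMod n) :
    cmapRatio M ((cmap M)^[k] P) i = cmapRatio M P (i + k) := by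
  induction k generalizing i with
  | zero => simp
  | succ k ih =>
    have hstep : CmapDefined M (cmap M ((cmap M)^[k] P)) := by
      simpa only [Function.iterate_succ_apply'] using hP (k + 1) le_rfl
    rw [Function.iterate_succ_apply', cmapRatio_cmap (hP k k.le_succ) hstep,
      ih fun j hj => hP j (hj.trans k.le_succ)]
    congr 1
    push_cast
    ring

theorem iterate_cmap_sub {k : ℕ} (hP : ∀ j < k, CmapDefined M ((cmap M)^[j] P)) (i : ZMod n) :
    (cmap M)^[k] P i - M = (∏ j ∈ Finset.range k, cmapRatio M P (i + j)) * (P i - M) := by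
  induction k with
  | zero => simp
  | succ k ih =>
    rw [Function.iterate_succ_apply', cmap_sub (hP k k.lt_succ_self),
      cmapRatio_iterate fun j hj => hP j (Nat.lt_succ_of_le hj),
      ih fun j hj => hP j (hj.trans k.lt_succ_self), Finset.prod_range_succ]
    ring

variable [NeZero n]

theorem eq_prod_cmapRatio_of_iterate_cmap_sub (hP : ∀ j < n, CmapDefined M ((cmap M)^[j] P))
    {σ : ℂ} {i : ZMod n} (hσ : (cmap M)^[n] P i - M = σ * (P i - M)) :
    σ = ∏ j, cmapRatio M P j := by
  rw [iterate_cmap_sub hP, prod_range_add_natCast_zmod] at hσ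
  exact (mul_right_cancel₀ ((hP 0 (NeZero.pos n)).sub_ne_zero i) hσ).symm

end CircumcenterMap

section CyclicPolygon

variable {n : ℕ} {M c : ℂ} {R : ℝ} {P : ZMod n → ℂ}

/-- The factor of `cmapRatio M P i` that is left after dividing by `P (i + 1) - M`. -/
noncomputable def edgeFactor (M : ℂ) (P : ZMod n → ℂ) (i : ZMod n) : ℂ :=
  conj (P i - P (i + 1)) / (2 * (doubleArea M (P i) (P (i + 1)) * Complex.I))

theorem edgeFactor_ne_zero (hP : CmapDefined M P) (i : ZMod n) : edgeFactor M P i ≠ 0 := by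
  have edge_ne_zero : P i - P (i + 1) ≠ 0 := sub_ne_zero.2 (hP.ne_succ i)
  have area_ne_zero := doubleArea_ne_zero (hP i)
  simp [edgeFactor, -map_sub, edge_ne_zero, area_ne_zero]

theorem cmapRatio_eq_mul_edgeFactor (hP : CmapDefined M P) (i : ZMod n) :
    cmapRatio M P i = (P (i + 1) - M) * edgeFactor M P i := by
  rw [cmapRatio, cmap, ccenter_sub (hP i), edgeFactor]
  field_simp [hP.sub_ne_zero i]

theorem sub_center_ne_zero (hP : CmapDefined M P) (hPR : ∀ i, P i ∈ Metric.sphere c R)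
    (i : ZMod n) : P i - c ≠ 0 := by
  intro hi
  have hR : R = 0 := by rw [← hPR i, dist_eq_norm, hi, norm_zero]
  have hsucc : P (i + 1) = c := by simpa [hR] using hPR (i + 1)
  exact hP.ne_succ i ((sub_eq_zero.1 hi).trans hsucc.symm)

theorem conj_sub_center_mul_edgeFactor (hPR : ∀ i, P i ∈ Metric.sphere c R) (i : ZMod n) :
    conj ((P i - c) * edgeFactor M P i) = (P (i + 1) - c) * edgeFactor M P i := by
  have mul_conj_eq (j : ZMod n) : (P j - c) * conj (P j - c) = R ^ 2 := by
    rw [Complex.mul_conj', ← dist_eq_norm, hPR j]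
  have numerator_eq :
      conj (P i - c) * (P i - P (i + 1)) = -((P (i + 1) - c) * conj (P i - P (i + 1))) := by
    have h := (mul_conj_eq i).trans (mul_conj_eq (i + 1)).symm
    simp only [map_sub] at h ⊢
    linear_combination h
  simp only [edgeFactor, map_mul, map_div₀, Complex.conj_conj, Complex.conj_ofReal,
    Complex.conj_I, map_ofNat, mul_neg, div_neg]
  rw [← mul_div_assoc, numerator_eq, neg_div, neg_neg, mul_div_assoc]

variable [NeZero n]

theorem conj_prod_sub_center_mul_edgeFactor (hPR : ∀ i, P i ∈ Metric.sphere c R) :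
    conj (∏ i, (P i - c) * edgeFactor M P i) = ∏ i, (P i - c) * edgeFactor M P i := by
  have shift : ∏ i, (P (i + 1) - c) = ∏ i, (P i - c) :=
    Equiv.prod_comp (Equiv.addRight 1) (P · - c)
  rw [map_prod]
  simp only [conj_sub_center_mul_edgeFactor hPR, Finset.prod_mul_distrib, shift]

theorem exists_prod_cmapRatio_eq_ofReal_mul (hP : CmapDefined M P)
    (hPR : ∀ i, P i ∈ Metric.sphere c R) :
    ∃ t : ℝ, t ≠ 0 ∧ ∏ i, cmapRatio M P i = t * ∏ i, (P i - M) / (P i - c) := by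
  obtain ⟨t, ht⟩ := Complex.conj_eq_iff_real.1 (conj_prod_sub_center_mul_edgeFactor (M := M) hPR)
  refine ⟨t, ?_, ?_⟩
  · rw [← Complex.ofReal_ne_zero, ← ht, Finset.prod_ne_zero_iff]
    exact fun i _ => mul_ne_zero (sub_center_ne_zero hP hPR i) (edgeFactor_ne_zero hP i)
  · have center_prod_ne_zero : ∏ i, (P i - c) ≠ 0 :=
      Finset.prod_ne_zero_iff.2 fun i _ => sub_center_ne_zero hP hPR i
    have shift : ∏ i, (P (i + 1) - M) = ∏ i, (P i - M) :=
      Equiv.prod_comp (Equiv.addRight 1) (P · - M)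
    simp only [← ht, cmapRatio_eq_mul_edgeFactor hP, Finset.prod_mul_distrib,
      Finset.prod_div_distrib, shift]
    field_simp

theorem square_zero_rotation_locus_general (hPR : ∀ i, P i ∈ Metric.sphere c R)
    (hdef : ∀ k < n, CmapDefined M ((cmap M)^[k] P))
    {σ : ℂ} {i : ZMod n} (hσ : (cmap M)^[n] P i - M = σ * (P i - M)) :
    σ.im = 0 ↔ (∏ j, (P j - M) / (P j - c)).im = 0 := by
  have hP : CmapDefined M P := hdef 0 (NeZero.pos n)
  obtain ⟨t, t_ne_zero, prod_eq⟩ := exists_prod_cmapRatio_eq_ofReal_mul hP hPR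
  rw [eq_prod_cmapRatio_of_iterate_cmap_sub hdef hσ, prod_eq, Complex.im_ofReal_mul,
    mul_eq_zero, or_iff_right t_ne_zero]

end CyclicPolygon

section Square

variable {P : ZMod 4 → ℂ}

theorem square_mem_unit_sphere
    (hP0 : P 0 = 1) (hP1 : P 1 = Complex.I) (hP2 : P 2 = -1) (hP3 : P 3 = -Complex.I)
    (i : ZMod 4) : P i ∈ Metric.sphere (0 : ℂ) 1 := by
  rw [mem_sphere_zero_iff_norm]
  fin_cases i
  · exact hP0 ▸ norm_one
  · exact hP1 ▸ Complex.norm_I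
  · exact hP2 ▸ (norm_neg _).trans norm_one
  · exact hP3 ▸ (norm_neg _).trans Complex.norm_I

theorem square_prod_sub_div
    (hP0 : P 0 = 1) (hP1 : P 1 = Complex.I) (hP2 : P 2 = -1) (hP3 : P 3 = -Complex.I) (M : ℂ) :
    ∏ i, (P i - M) / (P i - 0) = 1 - M ^ 4 := by
  have prod_eq : ∏ i, (P i - M) / (P i - 0) =
      (P 0 - M) / (P 0 - 0) * ((P 1 - M) / (P 1 - 0)) * ((P 2 - M) / (P 2 - 0)) *
        ((P 3 - M) / (P 3 - 0)) := Fin.prod_univ_four _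
  rw [prod_eq, hP0, hP1, hP2, hP3]
  field_simp
  linear_combination (M ^ 4 - M ^ 2) * Complex.I_sq

theorem im_one_sub_pow_four_eq_zero_iff (x y : ℝ) :
    (1 - (x + y * Complex.I) ^ 4).im = 0 ↔ x * y * (x ^ 2 - y ^ 2) = 0 := by
  have expansion : 1 - (x + y * Complex.I) ^ 4 =
      ((1 - x ^ 4 + 6 * x ^ 2 * y ^ 2 - y ^ 4 : ℝ) : ℂ) +
        ((-4 * (x * y * (x ^ 2 - y ^ 2)) : ℝ) : ℂ) * Complex.I := by
    push_cast
    linear_combination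
      -(6 * x ^ 2 * y ^ 2 + 4 * x * y ^ 3 * Complex.I + y ^ 4 * (Complex.I ^ 2 - 1)) * Complex.I_sq
  rw [expansion, ← Complex.mk_eq_add_mul_I, mul_eq_zero, or_iff_right (by norm_num)]

end Square

/-- For the unit square, the rotation of the similarity realized by four applications
of the circumcenter map is trivial or by `π` (i.e. `Im σ = 0`) iff `M = x + y·I` lies
on the union of the four lines `x·y·(x² − y²) = 0` through the center of the square
along directions `0`, `π/4`, `π/2`, `3π/4`. -/
theorem square_zero_rotation_locus
    (P : ZMod 4 → ℂ)
    (hP0 : P 0 = 1) (hP1 : P 1 = Complex.I) (hP2 : P 2 = -1) (hP3 : P 3 = -Complex.I)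
    (x y : ℝ) (M : ℂ) (hM : M = x + y * Complex.I)
    (hdef : ∀ k < 4, ∀ i : ZMod 4,
      AffineIndependent ℝ ![M, ((cmap M)^[k] P) i, ((cmap M)^[k] P) (i + 1)])
    (σ : ℂ) (hσ : ∀ i : ZMod 4, ((cmap M)^[4] P) i - M = σ * (P i - M)) :
    σ.im = 0 ↔ x * y * (x ^ 2 - y ^ 2) = 0 := by
  rw [square_zero_rotation_locus_general (square_mem_unit_sphere hP0 hP1 hP2 hP3) hdef (hσ 0),
    square_prod_sub_div hP0 hP1 hP2 hP3, hM, im_one_sub_pow_four_eq_zero_iff]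
end
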